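/- Assume in addition that f₀ is C², that f̃₁ is C¹ in x with sup_{t∈ℝ} ‖D_x f̃₁(0,t)‖ < ∞, that x is C³ in (t,ε), and that ξ₂(t) := (1/2) ∂²_ε x(t,ε)|_{ε=0} is bounded on ℝ. Then ξ₂(t) = ∫_{−∞}^{t} e^{A(t−τ)} [ (1/2) D²f₀(0)(ξ₁(τ), ξ₁(τ)) + D_x f̃₁(0,τ) ξ₁(τ) ] dτ for all t ∈ ℝ, where ξ₁(t) = ∫_{−∞}^{t} e^{A(t−τ)} f̃₁(0,τ) dτ and D²f₀(0) denotes the second derivative of f₀ at 0 viewed as a symmetric bilinear map. -/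

import Mathlib

open MeasureTheory

/-- The action of the matrix exponential `e^{tA}` on a vector of `EuclideanSpace ℝ (Fin n)`. -/
noncomputable def expAct {n : ℕ} (A : Matrix (Fin n) (Fin n) ℝ) (t : ℝ)
    (v : EuclideanSpace ℝ (Fin n)) : EuclideanSpace ℝ (Fin n) :=
  Matrix.toEuclideanLin (NormedSpace.exp (t • A)) v

open Filter Set Topology NormedSpace

/-!
Because `x` is `C³`, derivatives in `t` and `ε` commute, so differentiating the ODE once and twice
in `ε` at `0` shows that `ξ₁` and `ξ₂` solve linear equations `ξ' = A ξ + g` with `g` continuous and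
bounded. For such a solution `d/dτ (e^{(t-τ)A} ξ(τ)) = e^{(t-τ)A} g(τ)`; integrating over `(-∞, t]`
gives the formula, since boundedness of `ξ` and exponential decay of `e^{tA}` kill the boundary
term. The decay holds because the spectral radius of `e^A` is `< 1` (Gelfand's formula), which by
spectral mapping is the assumption on the eigenvalues of `A`.
-/

section Spectrum

theorem spectrum_bicommutant_subset {R 𝔸 : Type*} [CommRing R] [Ring 𝔸] [Algebra R 𝔸] {S : Set 𝔸}
    (b : Subalgebra.centralizer R (Subalgebra.centralizer R S : Set 𝔸)) :
    spectrum R b ⊆ spectrum R (b : 𝔸) := by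
  refine fun μ hμ hunit => hμ ?_
  obtain ⟨u, hu⟩ := hunit
  have hu_mem : (u : 𝔸) ∈ Subalgebra.centralizer R (Subalgebra.centralizer R S : Set 𝔸) :=
    hu ▸ sub_mem (algebraMap_mem _ μ) b.2
  have hinv_mem :
      ((u⁻¹ : 𝔸ˣ) : 𝔸) ∈ Subalgebra.centralizer R (Subalgebra.centralizer R S : Set 𝔸) :=
    fun c hc => Commute.units_inv_right (hu_mem c hc)
  refine isUnit_iff_exists.mpr ⟨⟨_, hinv_mem⟩, Subtype.ext ?_, Subtype.ext ?_⟩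
  · exact congrArg (· * ((u⁻¹ : 𝔸ˣ) : 𝔸)) hu.symm |>.trans u.mul_inv
  · exact congrArg (((u⁻¹ : 𝔸ˣ) : 𝔸) * ·) hu.symm |>.trans u.inv_mul

variable {𝔸 : Type*} [NormedRing 𝔸] [NormedAlgebra ℂ 𝔸] [CompleteSpace 𝔸]

theorem spectrum_exp_subset_of_commutative {𝔹 : Type*} [NormedCommRing 𝔹] [NormedAlgebra ℂ 𝔹]
    [CompleteSpace 𝔹] (b : 𝔹) : spectrum ℂ (exp b) ⊆ Complex.exp '' spectrum ℂ b := by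
  let : NormedAlgebra ℚ 𝔹 := .restrictScalars ℚ ℂ 𝔹
  intro μ hμ
  obtain ⟨φ, rfl⟩ := WeakDual.CharacterSpace.mem_spectrum_iff_exists.mp hμ
  refine ⟨φ b, WeakDual.CharacterSpace.mem_spectrum_iff_exists.mpr ⟨φ, rfl⟩, ?_⟩
  rw [map_exp φ (map_continuous φ), Complex.exp_eq_exp_ℂ]

theorem spectrum_exp_subset (a : 𝔸) : spectrum ℂ (exp a) ⊆ Complex.exp '' spectrum ℂ a := by
  -- The bicommutant of `a` is closed, commutative and inverse-closed, so characters are available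
  -- there and passing to it does not enlarge the spectrum of `a`.
  let B := Subalgebra.centralizer ℂ (Subalgebra.centralizer ℂ {a} : Set 𝔸)
  have hB_closed : IsClosed (B : Set 𝔸) := isClosed_centralizer _
  have : CompleteSpace B := hB_closed.completeSpace_coe
  let : NormedCommRing B :=
    { (inferInstance : NormedRing B) with
      mul_comm := fun x y => Subtype.ext <|
        centralizer_centralizer_comm_of_comm (S := {a}) (by simp) x.1 x.2 y.1 y.2 }
  let : NormedAlgebra ℚ B := .restrictScalars ℚ ℂ B
  let : NormedAlgebra ℚ 𝔸 := .restrictScalars ℚ ℂ 𝔸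
  let b : B := ⟨a, subset_centralizer_centralizer rfl⟩
  calc spectrum ℂ (exp a) = spectrum ℂ (B.val (exp b)) := by
        rw [map_exp B.val continuous_subtype_val]; rfl
    _ ⊆ spectrum ℂ (exp b) := AlgHom.spectrum_apply_subset B.val (exp b)
    _ ⊆ Complex.exp '' spectrum ℂ b := spectrum_exp_subset_of_commutative b
    _ ⊆ Complex.exp '' spectrum ℂ a := image_mono (spectrum_bicommutant_subset b)

theorem spectralRadius_exp_lt_one {a : 𝔸} (ha : ∀ μ ∈ spectrum ℂ a, μ.re < 0) :
    spectralRadius ℂ (exp a) < 1 := by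
  nontriviality 𝔸
  refine spectrum.spectralRadius_lt_of_forall_lt _ (r := 1) fun ν hν => ?_
  obtain ⟨μ, hμ, rfl⟩ := spectrum_exp_subset a hν
  rw [← NNReal.coe_lt_coe, coe_nnnorm, Complex.norm_exp]
  simpa using ha μ hμ

theorem exists_norm_pow_le_of_spectralRadius_lt_one {b : 𝔸} (hb : spectralRadius ℂ b < 1) :
    ∃ C c : ℝ, 0 < c ∧ ∀ k : ℕ, ‖b ^ k‖ ≤ C * Real.exp (-c * k) := by
  obtain ⟨r, hbr, hr⟩ := ENNReal.lt_iff_exists_nnreal_btwn.mp hb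
  have hr0 : 0 < r := by simpa using bot_le.trans_lt hbr
  have hr1 : r < 1 := by exact_mod_cast hr
  have hroot : ∀ᶠ k : ℕ in atTop, (‖b ^ k‖₊ : ENNReal) ^ (1 / k : ℝ) < r :=
    (spectrum.pow_nnnorm_pow_one_div_tendsto_nhds_spectralRadius b).eventually_lt_const hbr
  have hO : (fun k : ℕ => b ^ k) =O[atTop] fun k => (r : ℝ) ^ k := by
    refine .of_bound 1 ?_
    filter_upwards [hroot, eventually_gt_atTop 0] with k hk hk0
    rw [one_div, ENNReal.rpow_inv_lt_iff (by positivity), ENNReal.rpow_natCast] at hk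
    have hk_nnreal : ‖b ^ k‖₊ < r ^ k := by exact_mod_cast hk
    simpa using NNReal.coe_le_coe.mpr hk_nnreal.le
  obtain ⟨C, -, hC⟩ := Asymptotics.bound_of_isBigO_nat_atTop hO
  refine ⟨C, -Real.log r, neg_pos.mpr (Real.log_neg hr0 hr1), fun k => ?_⟩
  have hrk : Real.exp (- -Real.log r * k) = ‖(r : ℝ) ^ k‖ := by
    rw [neg_neg, mul_comm, Real.exp_nat_mul, Real.exp_log (by exact_mod_cast hr0),
      Real.norm_of_nonneg (by positivity)]
  rw [hrk]
  exact hC (by positivity)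

end Spectrum

/-- Exponential stability of the linear equation `u' = a u`: the semigroup `t ↦ exp (t • a)` decays
exponentially in norm. -/
def IsExpStable {𝔸 : Type*} [NormedRing 𝔸] [NormedAlgebra ℝ 𝔸] (a : 𝔸) : Prop :=
  ∃ C c : ℝ, 0 < c ∧ ∀ t : ℝ, 0 ≤ t → ‖exp (t • a)‖ ≤ C * Real.exp (-c * t)

theorem isExpStable_of_norm_exp_pow_le {𝔸 : Type*} [NormedRing 𝔸] [NormedAlgebra ℝ 𝔸]
    [CompleteSpace 𝔸] {a : 𝔸} {C c : ℝ} (hc : 0 < c)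
    (hpow : ∀ k : ℕ, ‖exp a ^ k‖ ≤ C * Real.exp (-c * k)) : IsExpStable a := by
  let : NormedAlgebra ℚ 𝔸 := .restrictScalars ℚ ℝ 𝔸
  have hcont : Continuous fun s : ℝ => exp (s • a) := exp_continuous.comp (by fun_prop)
  obtain ⟨M, hM⟩ := isCompact_Icc.exists_bound_of_continuousOn (hcont.continuousOn (s := Icc 0 1))
  have hC : 0 ≤ C := by simpa using (norm_nonneg _).trans (hpow 0)
  have hM0 : 0 ≤ M := (norm_nonneg _).trans (hM 0 (by simp))
  refine ⟨C * Real.exp c * M, c, hc, fun t ht => ?_⟩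
  have hsplit : exp (t • a) = exp a ^ ⌊t⌋₊ * exp ((t - ⌊t⌋₊) • a) := by
    rw [← exp_nsmul, ← Nat.cast_smul_eq_nsmul ℝ, ← exp_add_of_commute, ← add_smul,
      add_sub_cancel]
    exact ((Commute.refl a).smul_left _).smul_right _
  have hfrac : t - ⌊t⌋₊ ∈ Icc (0 : ℝ) 1 :=
    ⟨sub_nonneg.mpr (Nat.floor_le ht), by linarith [Nat.lt_floor_add_one t]⟩
  calc ‖exp (t • a)‖ ≤ ‖exp a ^ ⌊t⌋₊‖ * ‖exp ((t - ⌊t⌋₊) • a)‖ := hsplit ▸ norm_mul_le _ _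
    _ ≤ C * Real.exp (-c * ⌊t⌋₊) * M := by gcongr; exacts [hpow _, hM _ hfrac]
    _ ≤ C * Real.exp (c + -c * t) * M := by gcongr; nlinarith [hfrac.2]
    _ = C * Real.exp c * M * Real.exp (-c * t) := by rw [Real.exp_add]; ring

theorem isExpStable_of_forall_spectrum_re_neg {𝔸 : Type*} [NormedRing 𝔸] [NormedAlgebra ℂ 𝔸]
    [CompleteSpace 𝔸] {a : 𝔸} (ha : ∀ μ ∈ spectrum ℂ a, μ.re < 0) : IsExpStable a := by
  obtain ⟨C, c, hc, hpow⟩ :=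
    exists_norm_pow_le_of_spectralRadius_lt_one (spectralRadius_exp_lt_one ha)
  exact isExpStable_of_norm_exp_pow_le hc hpow

section Matrix

open scoped Matrix.Norms.L2Operator

variable {ι : Type*} [Fintype ι] [DecidableEq ι]

theorem norm_toEuclideanCLM_le_norm_map_ofReal (A : Matrix ι ι ℝ) :
    ‖Matrix.toEuclideanCLM (𝕜 := ℝ) A‖ ≤ ‖A.map Complex.ofReal‖ := by
  have norm_ofReal_comp (w : EuclideanSpace ℝ ι) :
      ‖WithLp.toLp 2 (fun i => (w i : ℂ))‖ = ‖w‖ := by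
    simp [EuclideanSpace.norm_eq]
  refine ContinuousLinearMap.opNorm_le_bound _ (norm_nonneg _) fun v => ?_
  calc ‖Matrix.toEuclideanCLM (𝕜 := ℝ) A v‖
      = ‖WithLp.toLp 2 (A.map Complex.ofReal |>.mulVec fun i => (v i : ℂ))‖ := by
        rw [← norm_ofReal_comp]
        congr 2
        ext i
        simp [Matrix.mulVec, dotProduct]
    _ ≤ ‖A.map Complex.ofReal‖ * ‖WithLp.toLp 2 (fun i => (v i : ℂ))‖ :=
        Matrix.l2_opNorm_mulVec (A.map Complex.ofReal) (.toLp 2 fun i => (v i : ℂ))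
    _ = ‖A.map Complex.ofReal‖ * ‖v‖ := by rw [norm_ofReal_comp]

theorem map_ofReal_exp_smul (A : Matrix ι ι ℝ) (t : ℝ) :
    (exp (t • A)).map Complex.ofReal = exp (t • A.map Complex.ofReal) := by
  let : NormedAlgebra ℚ (Matrix ι ι ℝ) := .restrictScalars ℚ ℝ _
  have hmap : (t • A).map Complex.ofReal = t • A.map Complex.ofReal := by
    ext; simp
  rw [← hmap]
  exact map_exp Complex.ofRealHom.mapMatrix
    (continuous_id.matrix_map Complex.continuous_ofReal) (t • A)

theorem toEuclideanCLM_exp (A : Matrix ι ι ℝ) :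
    Matrix.toEuclideanCLM (𝕜 := ℝ) (exp A) = exp (Matrix.toEuclideanCLM (𝕜 := ℝ) A) := by
  let : NormedAlgebra ℚ (Matrix ι ι ℝ) := .restrictScalars ℚ ℝ _
  exact map_exp (Matrix.toEuclideanCLM (𝕜 := ℝ) (n := ι)) (LinearMap.continuous_of_finiteDimensional
      (Matrix.toEuclideanCLM (𝕜 := ℝ) (n := ι)).toAlgEquiv.toLinearMap) A

theorem isExpStable_toEuclideanCLM {A : Matrix ι ι ℝ}
    (hA : ∀ μ ∈ spectrum ℂ (A.map Complex.ofReal), μ.re < 0) :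
    IsExpStable (Matrix.toEuclideanCLM (𝕜 := ℝ) A) := by
  obtain ⟨C, c, hc, hdecay⟩ := isExpStable_of_forall_spectrum_re_neg hA
  refine ⟨C, c, hc, fun t ht => le_trans ?_ (hdecay t ht)⟩
  rw [← map_smul, ← toEuclideanCLM_exp, ← map_ofReal_exp_smul]
  exact norm_toEuclideanCLM_le_norm_map_ofReal _

theorem expAct_eq_exp_smul_apply {n : ℕ} (A : Matrix (Fin n) (Fin n) ℝ) (t : ℝ)
    (v : EuclideanSpace ℝ (Fin n)) :
    expAct A t v = exp (t • Matrix.toEuclideanCLM (𝕜 := ℝ) A) v := by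
  rw [← map_smul, ← toEuclideanCLM_exp]
  rfl

end Matrix

section VariationOfConstants

variable {E : Type*} [NormedAddCommGroup E] [NormedSpace ℝ E]

theorem IsExpStable.exists_norm_exp_sub_smul_apply_le {L : E →L[ℝ] E} (hL : IsExpStable L) :
    ∃ C c : ℝ, 0 < c ∧ ∀ {v : E} {V t τ : ℝ}, ‖v‖ ≤ V → τ ≤ t →
      ‖exp ((t - τ) • L) v‖ ≤ C * Real.exp (-c * t) * V * Real.exp (c * τ) := by
  obtain ⟨C, c, hc, hdecay⟩ := hL
  refine ⟨C, c, hc, fun {v V t τ} hv hτ => ?_⟩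
  calc ‖exp ((t - τ) • L) v‖ ≤ ‖exp ((t - τ) • L)‖ * ‖v‖ :=
        ContinuousLinearMap.le_opNorm _ _
    _ ≤ C * Real.exp (-c * (t - τ)) * V :=
        mul_le_mul (hdecay _ (sub_nonneg.mpr hτ)) hv (norm_nonneg _)
          ((norm_nonneg _).trans (hdecay _ (sub_nonneg.mpr hτ)))
    _ = C * Real.exp (-c * t) * V * Real.exp (c * τ) := by
        rw [show -c * (t - τ) = -c * t + c * τ by ring, Real.exp_add]; ring

theorem IsExpStable.tendsto_exp_sub_smul_apply_atBot {L : E →L[ℝ] E} (hL : IsExpStable L)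
    {y : ℝ → E} (hy : ∃ C, ∀ τ, ‖y τ‖ ≤ C) (t : ℝ) :
    Tendsto (fun τ => exp ((t - τ) • L) (y τ)) atBot (𝓝 0) := by
  obtain ⟨C, c, hc, hbound⟩ := hL.exists_norm_exp_sub_smul_apply_le
  obtain ⟨Y, hY⟩ := hy
  have hexp : Tendsto (fun τ => Real.exp (c * τ)) atBot (𝓝 0) :=
    Real.tendsto_exp_atBot.comp (tendsto_id.const_mul_atBot hc)
  refine squeeze_zero_norm' ?_
    (by simpa only [mul_zero] using hexp.const_mul (C * Real.exp (-c * t) * Y))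
  filter_upwards [eventually_le_atBot t] with τ hτ using hbound (hY τ) hτ

variable [CompleteSpace E]

theorem hasDerivAt_exp_sub_smul (L : E →L[ℝ] E) (t τ : ℝ) :
    HasDerivAt (fun τ => exp ((t - τ) • L)) (-(exp ((t - τ) • L) * L)) τ := by
  simpa using! (hasDerivAt_exp_smul_const L (t - τ)).scomp τ ((hasDerivAt_id τ).const_sub t)

theorem IsExpStable.integrableOn_exp_sub_smul_apply {L : E →L[ℝ] E} (hL : IsExpStable L)
    {g : ℝ → E} (hg : Continuous g) (hgb : ∃ C, ∀ τ, ‖g τ‖ ≤ C) (t : ℝ) :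
    IntegrableOn (fun τ => exp ((t - τ) • L) (g τ)) (Iic t) := by
  obtain ⟨C, c, hc, hbound⟩ := hL.exists_norm_exp_sub_smul_apply_le
  obtain ⟨G, hG⟩ := hgb
  have hcont : Continuous fun τ => exp ((t - τ) • L) :=
    continuous_iff_continuousAt.mpr fun τ => (hasDerivAt_exp_sub_smul L t τ).continuousAt
  refine ((integrableOn_exp_mul_Iic hc t).const_mul (C * Real.exp (-c * t) * G)).mono'
    (hcont.clm_apply hg).aestronglyMeasurable ?_
  filter_upwards [ae_restrict_mem measurableSet_Iic] with τ hτ using hbound (hG τ) hτ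

theorem hasDerivAt_exp_sub_smul_apply {L : E →L[ℝ] E} {y : ℝ → E} {v : E} {τ : ℝ} (t : ℝ)
    (hy : HasDerivAt y (L (y τ) + v) τ) :
    HasDerivAt (fun τ => exp ((t - τ) • L) (y τ)) (exp ((t - τ) • L) v) τ := by
  simpa using (hasDerivAt_exp_sub_smul L t τ).clm_apply hy

theorem IsExpStable.eq_integral_of_bounded {L : E →L[ℝ] E} (hL : IsExpStable L) {y g : ℝ → E}
    (hy : ∀ τ, HasDerivAt y (L (y τ) + g τ) τ) (hyb : ∃ C, ∀ τ, ‖y τ‖ ≤ C)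
    (hg : Continuous g) (hgb : ∃ C, ∀ τ, ‖g τ‖ ≤ C) (t : ℝ) :
    y t = ∫ τ in Iic t, exp ((t - τ) • L) (g τ) := by
  rw [integral_Iic_of_hasDerivAt_of_tendsto'
    (fun τ _ => hasDerivAt_exp_sub_smul_apply t (hy τ))
    (hL.integrableOn_exp_sub_smul_apply hg hgb t) (hL.tendsto_exp_sub_smul_apply_atBot hyb t)]
  simp

end VariationOfConstants

section PartialDerivatives

variable {E : Type*} [NormedAddCommGroup E] [NormedSpace ℝ E] {J : Set ℝ}

theorem hasDerivWithinAt_fderivWithin_univ_prod {G : ℝ × ℝ → E} {t ε : ℝ}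
    (hG : DifferentiableWithinAt ℝ G (univ ×ˢ J) (t, ε)) :
    HasDerivWithinAt (fun δ => G (t, δ)) (fderivWithin ℝ G (univ ×ˢ J) (t, ε) (0, 1)) J ε :=
  hG.hasFDerivWithinAt.comp_hasDerivWithinAt ε
    ((hasDerivWithinAt_const ε J t).prodMk (hasDerivWithinAt_id ε J))
    fun _ hδ => mk_mem_prod (mem_univ t) hδ

theorem hasDerivAt_fderivWithin_univ_prod {G : ℝ × ℝ → E} {t ε : ℝ} (hε : ε ∈ J)
    (hG : DifferentiableWithinAt ℝ G (univ ×ˢ J) (t, ε)) :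
    HasDerivAt (fun s => G (s, ε)) (fderivWithin ℝ G (univ ×ˢ J) (t, ε) (1, 0)) t :=
  hasDerivWithinAt_univ.mp <| hG.hasFDerivWithinAt.comp_hasDerivWithinAt t
    ((hasDerivWithinAt_id t univ).prodMk (hasDerivWithinAt_const t univ ε))
    fun s _ => mk_mem_prod (mem_univ s) hε

variable {F : ℝ → ℝ → E}

theorem contDiffOn_derivWithin_univ_prod {m k : WithTop ℕ∞} (hJ : UniqueDiffOn ℝ J)
    (hF : ContDiffOn ℝ k (fun p : ℝ × ℝ => F p.1 p.2) (univ ×ˢ J)) (hmk : m + 1 ≤ k) :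
    ContDiffOn ℝ m (fun p : ℝ × ℝ => derivWithin (F p.1) J p.2) (univ ×ˢ J) := by
  have hF_diff := (hF.of_le (le_add_self.trans hmk)).differentiableOn one_ne_zero
  refine ((hF.fderivWithin (uniqueDiffOn_univ.prod hJ) hmk).clm_apply
    (contDiffOn_const (c := ((0 : ℝ), (1 : ℝ))))).congr fun p hp => ?_
  exact (hasDerivWithinAt_fderivWithin_univ_prod (hF_diff p hp)).derivWithin (hJ p.2 hp.2)

theorem contDiff_slice_derivWithin {m k : WithTop ℕ∞} (hJ : UniqueDiffOn ℝ J)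
    (hF : ContDiffOn ℝ k (fun p : ℝ × ℝ => F p.1 p.2) (univ ×ˢ J)) (hmk : m + 1 ≤ k)
    {ε : ℝ} (hε : ε ∈ J) : ContDiff ℝ m fun t => derivWithin (F t) J ε :=
  (contDiffOn_derivWithin_univ_prod hJ hF hmk).comp_contDiff
    (contDiff_id.prodMk contDiff_const) fun t => mk_mem_prod (mem_univ t) hε

theorem hasDerivWithinAt_derivWithin_of_contDiffOn {k : WithTop ℕ∞}
    (hF : ContDiffOn ℝ k (fun p : ℝ × ℝ => F p.1 p.2) (univ ×ˢ J)) (hk : k ≠ 0) (t : ℝ) {ε : ℝ}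
    (hε : ε ∈ J) : HasDerivWithinAt (F t) (derivWithin (F t) J ε) J ε :=
  (hasDerivWithinAt_fderivWithin_univ_prod (hF.differentiableOn hk _
    (mk_mem_prod (mem_univ t) hε))).differentiableWithinAt.hasDerivWithinAt

theorem hasDerivAt_derivWithin_of_contDiffOn (hJ : UniqueDiffOn ℝ J)
    (hJ_closure : J ⊆ closure (interior J))
    (hF : ContDiffOn ℝ 2 (fun p : ℝ × ℝ => F p.1 p.2) (univ ×ˢ J)) (t : ℝ) {ε : ℝ} (hε : ε ∈ J) :
    HasDerivAt (fun s => derivWithin (F s) J ε)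
      (derivWithin (fun δ => deriv (fun s => F s δ) t) J ε) t := by
  set G : ℝ × ℝ → E := fun p => F p.1 p.2
  set S : Set (ℝ × ℝ) := univ ×ˢ J with hS
  have hS_unique : UniqueDiffOn ℝ S := uniqueDiffOn_univ.prod hJ
  have hp : (t, ε) ∈ S := mk_mem_prod (mem_univ t) hε
  have hG_diff : DifferentiableOn ℝ G S := hF.differentiableOn two_ne_zero
  have hsymm : IsSymmSndFDerivWithinAt ℝ G S (t, ε) := by
    refine (hF _ hp).isSymmSndFDerivWithinAt (by simp) hS_unique ?_ hp
    rw [hS, interior_prod_eq, interior_univ, closure_prod_eq, closure_univ]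
    exact mk_mem_prod (mem_univ t) (hJ_closure hε)
  have hDG : DifferentiableWithinAt ℝ (fderivWithin ℝ G S) S (t, ε) :=
    (hF.fderivWithin hS_unique (m := 1) (by norm_num)).differentiableOn one_ne_zero _ hp
  have hεt : derivWithin (fun δ => deriv (fun s => F s δ) t) J ε =
      fderivWithin ℝ (fderivWithin ℝ G S) S (t, ε) (0, 1) (1, 0) := by
    have hderiv : ∀ δ ∈ J, deriv (fun s => F s δ) t = fderivWithin ℝ G S (t, δ) (1, 0) :=
      fun δ hδ => (hasDerivAt_fderivWithin_univ_prod hδ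
        (hG_diff _ (mk_mem_prod (mem_univ t) hδ))).deriv
    rw [derivWithin_congr hderiv (hderiv ε hε)]
    simpa using ((hasDerivWithinAt_fderivWithin_univ_prod hDG).clm_apply
      (hasDerivWithinAt_const ε J ((1 : ℝ), (0 : ℝ)))).derivWithin (hJ ε hε)
  have hε_slice : (fun s => derivWithin (F s) J ε) = fun s => fderivWithin ℝ G S (s, ε) (0, 1) :=
    funext fun s => (hasDerivWithinAt_fderivWithin_univ_prod
      (hG_diff _ (mk_mem_prod (mem_univ s) hε))).derivWithin (hJ ε hε)
  rw [hεt, hsymm.eq, hε_slice]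
  simpa using (hasDerivAt_fderivWithin_univ_prod hε hDG).clm_apply
    (hasDerivAt_const t ((0 : ℝ), (1 : ℝ)))

end PartialDerivatives

section Variations

variable {E : Type*} [NormedAddCommGroup E] [NormedSpace ℝ E] {L : E →L[ℝ] E} {f₀ : E → E}
  {J : Set ℝ}

theorem hasDerivWithinAt_id_smul_zero {φ : ℝ → E} (hφ : ContinuousWithinAt φ J 0) :
    HasDerivWithinAt (fun ε => ε • φ ε) (φ 0) J 0 := by
  rw [hasDerivWithinAt_iff_tendsto_slope]
  refine (hφ.mono_left (nhdsWithin_mono _ sdiff_subset)).congr' ?_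
  filter_upwards [self_mem_nhdsWithin] with ε hε
  have hε_ne : ε ≠ 0 := hε.2
  simp [slope, hε_ne]

theorem hasDerivWithinAt_perturbedField {g : E → E} {γ : ℝ → E} {γ' : E} {ε : ℝ}
    (hf₀ : Differentiable ℝ f₀) (hg : Differentiable ℝ g) (hγ : HasDerivWithinAt γ γ' J ε) :
    HasDerivWithinAt (fun δ => L (γ δ) + f₀ (γ δ) + δ • g (γ δ))
      (L γ' + fderiv ℝ f₀ (γ ε) γ' + (ε • fderiv ℝ g (γ ε) γ' + g (γ ε))) J ε := by
  simpa using! ((L.hasFDerivAt.comp_hasDerivWithinAt ε hγ).add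
    ((hf₀ (γ ε)).hasFDerivAt.comp_hasDerivWithinAt ε hγ)).add
    ((hasDerivWithinAt_id ε J).smul ((hg (γ ε)).hasFDerivAt.comp_hasDerivWithinAt ε hγ))

theorem hasDerivWithinAt_linearizedField_zero {g : E → E} {γ u : ℝ → E} {u' : E}
    (hf₀ : ContDiff ℝ 2 f₀) (hDf₀0 : fderiv ℝ f₀ 0 = 0) (hg : ContDiff ℝ 1 g) (hγ0 : γ 0 = 0)
    (hγ : HasDerivWithinAt γ (u 0) J 0) (hu : HasDerivWithinAt u u' J 0) :
    HasDerivWithinAt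
      (fun δ => L (u δ) + fderiv ℝ f₀ (γ δ) (u δ) + (δ • fderiv ℝ g (γ δ) (u δ) + g (γ δ)))
      (L u' + fderiv ℝ (fderiv ℝ f₀) 0 (u 0) (u 0) + (2 : ℝ) • fderiv ℝ g 0 (u 0)) J 0 := by
  have hDf₀ : HasFDerivAt (fderiv ℝ f₀) (fderiv ℝ (fderiv ℝ f₀) (γ 0)) (γ 0) :=
    ((hf₀.fderiv_right (m := 1) (by norm_num)).differentiable one_ne_zero _).hasFDerivAt
  have hDg : ContinuousWithinAt (fun δ => fderiv ℝ g (γ δ) (u δ)) J 0 :=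
    ((hg.continuous_fderiv one_ne_zero).continuousAt.comp_continuousWithinAt
      hγ.continuousWithinAt).clm_apply hu.continuousWithinAt
  have hsum := ((L.hasFDerivAt.comp_hasDerivWithinAt 0 hu).add
    ((hDf₀.comp_hasDerivWithinAt 0 hγ).clm_apply hu)).add
    ((hasDerivWithinAt_id_smul_zero hDg).add
      ((hg.differentiable one_ne_zero (γ 0)).hasFDerivAt.comp_hasDerivWithinAt 0 hγ))
  simpa [hγ0, hDf₀0, two_smul] using! hsum

variable {f₁ : E → ℝ → E} {x : ℝ → ℝ → E}

theorem hasDerivAt_firstVariation (hJ : UniqueDiffOn ℝ J) (hJ_closure : J ⊆ closure (interior J))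
    (hf₀ : Differentiable ℝ f₀) (hf₁ : ∀ t, Differentiable ℝ fun y => f₁ y t)
    (hx : ContDiffOn ℝ 2 (fun p : ℝ × ℝ => x p.1 p.2) (univ ×ˢ J))
    (hsol : ∀ ε ∈ J, ∀ t, HasDerivAt (fun s => x s ε)
      (L (x t ε) + f₀ (x t ε) + ε • f₁ (x t ε) t) t)
    {ε : ℝ} (hε : ε ∈ J) (t : ℝ) :
    HasDerivAt (fun s => derivWithin (x s) J ε)
      (L (derivWithin (x t) J ε) + fderiv ℝ f₀ (x t ε) (derivWithin (x t) J ε) +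
        (ε • fderiv ℝ (fun y => f₁ y t) (x t ε) (derivWithin (x t) J ε) + f₁ (x t ε) t)) t := by
  have hmixed := hasDerivAt_derivWithin_of_contDiffOn hJ hJ_closure hx t hε
  rw [derivWithin_congr (fun δ hδ => (hsol δ hδ t).deriv) (hsol ε hε t).deriv] at hmixed
  have hfield := hasDerivWithinAt_perturbedField (L := L) hf₀ (hf₁ t)
    (hasDerivWithinAt_derivWithin_of_contDiffOn hx two_ne_zero t hε)
  rwa [hfield.derivWithin (hJ ε hε)] at hmixed

theorem hasDerivAt_firstVariation_zero (hJ : UniqueDiffOn ℝ J)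
    (hJ_closure : J ⊆ closure (interior J)) (hJ0 : 0 ∈ J)
    (hf₀ : Differentiable ℝ f₀) (hDf₀0 : fderiv ℝ f₀ 0 = 0)
    (hf₁ : ∀ t, Differentiable ℝ fun y => f₁ y t)
    (hx : ContDiffOn ℝ 2 (fun p : ℝ × ℝ => x p.1 p.2) (univ ×ˢ J))
    (hsol : ∀ ε ∈ J, ∀ t, HasDerivAt (fun s => x s ε)
      (L (x t ε) + f₀ (x t ε) + ε • f₁ (x t ε) t) t)
    (hx0 : ∀ t, x t 0 = 0) (t : ℝ) :
    HasDerivAt (fun s => derivWithin (x s) J 0) (L (derivWithin (x t) J 0) + f₁ 0 t) t := by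
  simpa [hx0, hDf₀0] using hasDerivAt_firstVariation hJ hJ_closure hf₀ hf₁ hx hsol hJ0 t

theorem iteratedDerivWithin_two {F : ℝ → E} {s : Set ℝ} :
    iteratedDerivWithin 2 F s = derivWithin (derivWithin F s) s := by
  rw [iteratedDerivWithin_succ', iteratedDerivWithin_one]

/-- The inhomogeneity `(1/2) D²f₀(0)(ξ, ξ) + D_x f₁(0, t) ξ` of the equation satisfied by the second
Taylor coefficient in `ε`, where `ξ` is the first Taylor coefficient. -/
noncomputable def secondOrderForcing (f₀ : E → E) (f₁ : E → ℝ → E) (ξ : ℝ → E) (t : ℝ) : E :=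
  (1 / 2 : ℝ) • fderiv ℝ (fderiv ℝ f₀) 0 (ξ t) (ξ t) + fderiv ℝ (fun y => f₁ y t) 0 (ξ t)

theorem exists_norm_secondOrderForcing_le {ξ : ℝ → E} (hξ : ∃ C, ∀ t, ‖ξ t‖ ≤ C)
    (hDf₁ : ∃ C, ∀ t, ‖fderiv ℝ (fun y => f₁ y t) 0‖ ≤ C) :
    ∃ C, ∀ t, ‖secondOrderForcing f₀ f₁ ξ t‖ ≤ C := by
  obtain ⟨C, hC⟩ := hξ
  obtain ⟨D, hD⟩ := hDf₁
  refine ⟨‖(1 / 2 : ℝ)‖ * (‖fderiv ℝ (fderiv ℝ f₀) 0‖ * C * C) + D * C, fun t => ?_⟩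
  refine norm_add_le_of_le ?_ (ContinuousLinearMap.le_of_opNorm_le_of_le _ (hD t) (hC t))
  rw [norm_smul]
  gcongr
  exact ContinuousLinearMap.le_of_opNorm₂_le_of_le _ le_rfl (hC t) (hC t)

theorem hasDerivAt_secondVariation (hJ : UniqueDiffOn ℝ J)
    (hJ_closure : J ⊆ closure (interior J)) (hJ0 : 0 ∈ J)
    (hf₀ : ContDiff ℝ 2 f₀) (hDf₀0 : fderiv ℝ f₀ 0 = 0)
    (hf₁ : ∀ t, ContDiff ℝ 1 fun y => f₁ y t)
    (hx : ContDiffOn ℝ 3 (fun p : ℝ × ℝ => x p.1 p.2) (univ ×ˢ J))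
    (hsol : ∀ ε ∈ J, ∀ t, HasDerivAt (fun s => x s ε)
      (L (x t ε) + f₀ (x t ε) + ε • f₁ (x t ε) t) t)
    (hx0 : ∀ t, x t 0 = 0) (t : ℝ) :
    HasDerivAt (fun s => (1 / 2 : ℝ) • iteratedDerivWithin 2 (x s) J 0)
      (L ((1 / 2 : ℝ) • iteratedDerivWithin 2 (x t) J 0) +
        secondOrderForcing f₀ f₁ (fun s => derivWithin (x s) J 0) t) t := by
  have hx2 := hx.of_le (m := 2) (by norm_num)
  have hu : ContDiffOn ℝ 2 (fun p : ℝ × ℝ => derivWithin (x p.1) J p.2) (univ ×ˢ J) :=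
    contDiffOn_derivWithin_univ_prod hJ hx (by norm_num)
  have hfirst : ∀ δ ∈ J, _ := fun δ hδ => (hasDerivAt_firstVariation hJ hJ_closure
    (hf₀.differentiable two_ne_zero) (fun t => (hf₁ t).differentiable one_ne_zero) hx2 hsol hδ
    t).deriv
  have hmixed := hasDerivAt_derivWithin_of_contDiffOn (F := fun t => derivWithin (x t) J) hJ
    hJ_closure hu t hJ0
  have hfield := hasDerivWithinAt_linearizedField_zero (L := L) hf₀ hDf₀0 (hf₁ t) (hx0 t)
    (hasDerivWithinAt_derivWithin_of_contDiffOn hx2 two_ne_zero t hJ0)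
    (hasDerivWithinAt_derivWithin_of_contDiffOn (F := fun t => derivWithin (x t) J) hu
      two_ne_zero t hJ0)
  rw [derivWithin_congr hfirst (hfirst 0 hJ0), hfield.derivWithin (hJ 0 hJ0)] at hmixed
  simp only [iteratedDerivWithin_two]
  convert! hmixed.const_smul (1 / 2 : ℝ) using 1
  rw [secondOrderForcing, map_smul]
  module

theorem continuous_inhomogeneity_of_hasDerivAt {y g : ℝ → E} (hy : ContDiff ℝ 1 y)
    (hyg : ∀ t, HasDerivAt y (L (y t) + g t) t) : Continuous g := by
  have hg : g = fun t => deriv y t - L (y t) := funext fun t => by rw [(hyg t).deriv]; abel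
  exact hg ▸ (hy.continuous_deriv le_rfl).sub (L.continuous.comp hy.continuous)

end Variations

theorem stmt_7_general {E : Type*} [NormedAddCommGroup E] [NormedSpace ℝ E] [CompleteSpace E]
    (L : E →L[ℝ] E) (hL : IsExpStable L)
    (f₀ : E → E) (hf₀ : ContDiff ℝ 2 f₀) (hDf₀0 : fderiv ℝ f₀ 0 = 0)
    (f₁ : E → ℝ → E) (hf₁x : ∀ t, ContDiff ℝ 1 fun y => f₁ y t)
    (hf₁b : ∃ C : ℝ, ∀ t, ‖f₁ 0 t‖ ≤ C)
    (hDf₁b : ∃ C : ℝ, ∀ t, ‖fderiv ℝ (fun y => f₁ y t) 0‖ ≤ C)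
    (J : Set ℝ) (hJ : UniqueDiffOn ℝ J) (hJ_closure : J ⊆ closure (interior J)) (hJ0 : 0 ∈ J)
    (x : ℝ → ℝ → E) (hx : ContDiffOn ℝ 3 (fun p : ℝ × ℝ => x p.1 p.2) (univ ×ˢ J))
    (hsol : ∀ ε ∈ J, ∀ t, HasDerivAt (fun s => x s ε)
      (L (x t ε) + f₀ (x t ε) + ε • f₁ (x t ε) t) t)
    (hx0 : ∀ t, x t 0 = 0)
    (hξ₁bdd : ∃ C : ℝ, ∀ t, ‖derivWithin (x t) J 0‖ ≤ C)
    (hξ₂bdd : ∃ C : ℝ, ∀ t, ‖(1 / 2 : ℝ) • iteratedDerivWithin 2 (x t) J 0‖ ≤ C) :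
    (∀ t, IntegrableOn (fun τ => exp ((t - τ) • L)
      (secondOrderForcing f₀ f₁ (fun s => derivWithin (x s) J 0) τ)) (Iic t)) ∧
    (∀ t, derivWithin (x t) J 0 = ∫ τ in Iic t, exp ((t - τ) • L) (f₁ 0 τ)) ∧
    (∀ t, (1 / 2 : ℝ) • iteratedDerivWithin 2 (x t) J 0 = ∫ τ in Iic t, exp ((t - τ) • L)
      (secondOrderForcing f₀ f₁ (fun s => derivWithin (x s) J 0) τ)) := by
  have hξ₁ := hasDerivAt_firstVariation_zero hJ hJ_closure hJ0 (hf₀.differentiable two_ne_zero)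
    hDf₀0 (fun t => (hf₁x t).differentiable one_ne_zero) (hx.of_le (by norm_num)) hsol hx0
  have hξ₂ := hasDerivAt_secondVariation hJ hJ_closure hJ0 hf₀ hDf₀0 hf₁x hx hsol hx0
  have hf₁_cont : Continuous (f₁ 0) :=
    continuous_inhomogeneity_of_hasDerivAt (contDiff_slice_derivWithin hJ hx (by norm_num) hJ0) hξ₁
  have hξ₂_smooth : ContDiff ℝ 1 fun t => (1 / 2 : ℝ) • iteratedDerivWithin 2 (x t) J 0 := by
    simp only [iteratedDerivWithin_two]
    exact (contDiff_slice_derivWithin hJ (contDiffOn_derivWithin_univ_prod (m := 2) hJ hx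
      (by norm_num)) (by norm_num) hJ0).const_smul _
  have hforcing_cont := continuous_inhomogeneity_of_hasDerivAt hξ₂_smooth hξ₂
  have hforcing_bdd := exists_norm_secondOrderForcing_le (f₀ := f₀) hξ₁bdd hDf₁b
  exact ⟨hL.integrableOn_exp_sub_smul_apply hforcing_cont hforcing_bdd,
    hL.eq_integral_of_bounded hξ₁ hξ₁bdd hf₁_cont hf₁b,
    hL.eq_integral_of_bounded hξ₂ hξ₂bdd hforcing_cont hforcing_bdd⟩

/-- second-order coefficient of the anchor trajectory.  Under the hypotheses
of Statement 6, assume additionally that `f₀` is `C²`, `f̃₁` is `C¹` in `x` with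
`sup_t ‖D_x f̃₁(0,t)‖ < ∞`, `x` is `C³`, and `ξ₂(t) := (1/2) ∂²_ε x(t,ε)|_{ε=0}` is bounded.
Then `ξ₂(t) = ∫_{-∞}^{t} e^{A(t−τ)} [ (1/2) D²f₀(0)(ξ₁(τ),ξ₁(τ)) + D_x f̃₁(0,τ) ξ₁(τ) ] dτ`,
where `ξ₁(t) = ∂_ε x(t,ε)|_{ε=0} = ∫_{-∞}^{t} e^{A(t−τ)} f̃₁(0,τ) dτ`. -/
theorem stmt_7 {n : ℕ} (A : Matrix (Fin n) (Fin n) ℝ)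
    (hspec : ∀ μ ∈ spectrum ℂ (A.map Complex.ofReal), μ.re < 0)
    (f₀ : EuclideanSpace ℝ (Fin n) → EuclideanSpace ℝ (Fin n))
    (hf₀ : ContDiff ℝ 2 f₀) (hf₀0 : f₀ 0 = 0) (hDf₀0 : fderiv ℝ f₀ 0 = 0)
    (f₁ : EuclideanSpace ℝ (Fin n) → ℝ → EuclideanSpace ℝ (Fin n))
    (hf₁c : Continuous fun p : EuclideanSpace ℝ (Fin n) × ℝ => f₁ p.1 p.2)
    (hf₁x : ∀ t : ℝ, ContDiff ℝ 1 fun y => f₁ y t)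
    (hf₁b : ∃ C : ℝ, ∀ t : ℝ, ‖f₁ 0 t‖ ≤ C)
    (hDf₁b : ∃ C : ℝ, ∀ t : ℝ, ‖fderiv ℝ (fun y => f₁ y t) 0‖ ≤ C)
    (ε₀ : ℝ) (hε₀ : 0 < ε₀)
    (x : ℝ → ℝ → EuclideanSpace ℝ (Fin n))
    (hxC3 : ContDiffOn ℝ 3 (fun p : ℝ × ℝ => x p.1 p.2) (Set.univ ×ˢ Set.Ico 0 ε₀))
    (hsol : ∀ ε ∈ Set.Ico (0 : ℝ) ε₀, ∀ t : ℝ, HasDerivAt (fun s => x s ε)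
      (Matrix.toEuclideanLin A (x t ε) + f₀ (x t ε) + ε • f₁ (x t ε) t) t)
    (hx0 : ∀ t : ℝ, x t 0 = 0)
    (hξ₁bdd : ∃ C : ℝ, ∀ t : ℝ,
      ‖derivWithin (fun ε => x t ε) (Set.Ico 0 ε₀) 0‖ ≤ C)
    (hξ₂bdd : ∃ C : ℝ, ∀ t : ℝ,
      ‖(1 / 2 : ℝ) • iteratedDerivWithin 2 (fun ε => x t ε) (Set.Ico 0 ε₀) 0‖ ≤ C) :
    (∀ t : ℝ, IntegrableOn (fun τ => expAct A (t - τ)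
      ((1 / 2 : ℝ) • (fderiv ℝ (fderiv ℝ f₀) 0
          (derivWithin (fun ε => x τ ε) (Set.Ico 0 ε₀) 0)
          (derivWithin (fun ε => x τ ε) (Set.Ico 0 ε₀) 0)) +
        fderiv ℝ (fun y => f₁ y τ) 0
          (derivWithin (fun ε => x τ ε) (Set.Ico 0 ε₀) 0))) (Set.Iic t)) ∧
    (∀ t : ℝ, derivWithin (fun ε => x t ε) (Set.Ico 0 ε₀) 0
      = ∫ τ in Set.Iic t, expAct A (t - τ) (f₁ 0 τ)) ∧
    (∀ t : ℝ, (1 / 2 : ℝ) • iteratedDerivWithin 2 (fun ε => x t ε) (Set.Ico 0 ε₀) 0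
      = ∫ τ in Set.Iic t, expAct A (t - τ)
        ((1 / 2 : ℝ) • (fderiv ℝ (fderiv ℝ f₀) 0
            (derivWithin (fun ε => x τ ε) (Set.Ico 0 ε₀) 0)
            (derivWithin (fun ε => x τ ε) (Set.Ico 0 ε₀) 0)) +
          fderiv ℝ (fun y => f₁ y τ) 0
            (derivWithin (fun ε => x τ ε) (Set.Ico 0 ε₀) 0))) := by
  have hIco_closure : Ico 0 ε₀ ⊆ closure (interior (Ico 0 ε₀)) := by
    simpa only [interior_Ico, closure_Ioo hε₀.ne] using Ico_subset_Icc_self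
  simpa only [expAct_eq_exp_smul_apply, secondOrderForcing] using
    stmt_7_general (Matrix.toEuclideanCLM (𝕜 := ℝ) A) (isExpStable_toEuclideanCLM hspec) f₀ hf₀
      hDf₀0 f₁ hf₁x hf₁b hDf₁b (Ico 0 ε₀) (uniqueDiffOn_Ico 0 ε₀) hIco_closure
      ⟨le_rfl, hε₀⟩ x hxC3 hsol hx0 hξ₁bdd hξ₂bdd
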